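/- Let C be a connected strongly graded k-coalgebra such that Ext_C^{n,m}(k,k) = 0 for all n ≠ m (i.e., C is Koszul). Then C is quadratic. -/

import Mathlib

/-!
Coassociativity and strong gradedness reduce quadraticity to the exactness, for every `n`, of
`C_{n+2} → C₁ ⊗ C_{n+1} → (C₁ ⊗ C₁ ⧸ Im Δ_{1,1}) ⊗ C_n`. For `n = 0` this is trivial; for `n ≥ 1` it
is proved by induction on `n`. Let `y ∈ C₁ ⊗ C_{n+1}` lie in the kernel of the second map. For
`a + r = n + 1` with `r ≥ 1`, exactness in lower degrees shows that
`(id ⊗ Δ_{a,r}) y ∈ C₁ ⊗ C_a ⊗ C_r` comes from a unique `w_{1+a,r} ∈ C_{1+a} ⊗ C_r`. By uniqueness,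
the `w_{s,r}` are the components of a `2`-cocycle of degree `n + 2` in the cobar complex. As
`Ext^{2,n+2} = 0`, this cocycle is `Δ₊ x` for some `x ∈ C_{n+2}`, and comparing the components in
`C₁ ⊗ C_{n+1}` gives `Δ_{1,n+1} x = w_{1,n+1} = y`.
-/

open TensorProduct

noncomputable section
namespace Koszul

variable (k : Type) [Field k]

/-- Iterated tensor powers: `TP V 0 = k`, `TP V 1 = V`, `TP V (n+2) = V ⊗ TP V (n+1)`. -/
def TP (V : Type) [AddCommGroup V] [Module k V] : ℕ → ModuleCat k
  | 0 => ModuleCat.of k k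
  | 1 => ModuleCat.of k V
  | (n+2) => ModuleCat.of k (V ⊗[k] (TP V (n+1)))

variable (C : Type) [AddCommGroup C] [Module k C] [Coalgebra k C]
variable (𝒞 : ℕ → Submodule k C)

/-- The data exhibiting `C = ⊕ₙ Cₙ` as a connected graded coalgebra: a grouplike element `g`
spanning `C₀`, the counit vanishing in positive degrees, and the components
`Δc p q : C_{p+q} → C_p ⊗ C_q` of the comultiplication (extended by `0` to the other
homogeneous components of `C`). -/
structure GradedCoalgebraData where
  g : C
  Δc : ∀ p q : ℕ, C →ₗ[k] (↥(𝒞 p) ⊗[k] ↥(𝒞 q))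
  hC0 : 𝒞 0 = Submodule.span k {g}
  hgrp : Coalgebra.comul (R := k) g = g ⊗ₜ[k] g
  hcu : Coalgebra.counit (R := k) g = 1
  hcounit : ∀ n, 1 ≤ n → ∀ x ∈ 𝒞 n, Coalgebra.counit (R := k) x = 0
  hΔc : ∀ n, ∀ x ∈ 𝒞 n, Coalgebra.comul (R := k) x =
    ∑ p ∈ Finset.range (n+1),
      (TensorProduct.map (𝒞 p).subtype (𝒞 (n-p)).subtype) (Δc p (n-p) x)
  hΔc0 : ∀ p q n, n ≠ p + q → ∀ x ∈ 𝒞 n, Δc p q x = 0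

/-- `C` is strongly graded: every component `Δ_{p,q} : C_{p+q} → C_p ⊗ C_q` is injective. -/
def GradedCoalgebraData.Strong (D : GradedCoalgebraData k C 𝒞) : Prop :=
  ∀ p q : ℕ, ∀ x ∈ 𝒞 (p + q), D.Δc p q x = 0 → x = 0

/-- `Δ₊ : x ↦ Δ(x) - g ⊗ x - x ⊗ g`, the reduced comultiplication; on a homogeneous element
of positive degree `n` it equals the sum of the components `Δ_{p,q}` with `p, q ≥ 1`. -/
def deltaPlus (g : C) : C →ₗ[k] C ⊗[k] C :=
  Coalgebra.comul - (TensorProduct.mk k C C g) - ((TensorProduct.mk k C C).flip g)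

/-- `expand Δp n i` applies `Δp` to the `(i+1)`-st tensor factor of `C^{⊗(n+1)}`. -/
def expand (Δp : C →ₗ[k] C ⊗[k] C) : (n i : ℕ) → (↥(TP k C (n+1)) →ₗ[k] ↥(TP k C (n+2)))
  | 0, 0 => Δp
  | 0, (_+1) => 0
  | (n+1), 0 => (TensorProduct.assoc k C C ↥(TP k C (n+1))).toLinearMap.comp
      (LinearMap.rTensor ↥(TP k C (n+1)) Δp)
  | (n+1), (i+1) => LinearMap.lTensor C (expand Δp n i)

/-- The differential `dⁿ = Σ_{i=1}^{n} (-1)^{i-1} id ⊗ ⋯ ⊗ Δ₊ ⊗ ⋯ ⊗ id` of the normalized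
cobar complex (with `d⁰ = 0`). -/
def cobarD (Δp : C →ₗ[k] C ⊗[k] C) : (n : ℕ) → (↥(TP k C n) →ₗ[k] ↥(TP k C (n+1)))
  | 0 => 0
  | (n+1) => ∑ i ∈ Finset.range (n+1), ((-1:k)^i) • expand k C Δp n i

/-- `omega 𝒱 n m = ⊕_{𝐦 ∈ 𝒫ₙ(m)} V_{m₁} ⊗ ⋯ ⊗ V_{mₙ}`: the span, inside the `n`-th tensor
power, of tensors of homogeneous elements of positive degrees summing to `m`. -/
def omega {V : Type} [AddCommGroup V] [Module k V] (𝒱 : ℕ → Submodule k V) :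
    (n m : ℕ) → Submodule k ↥(TP k V n)
  | 0, m => if m = 0 then ⊤ else ⊥
  | 1, m => if m = 0 then ⊥ else 𝒱 m
  | (n+2), m => ⨆ p ∈ Finset.Icc 1 m,
      LinearMap.range (TensorProduct.map (𝒱 p).subtype (omega 𝒱 (n+1) (m-p)).subtype)

/-- `Ext_C^{n,m}(k,k) = Ker dⁿ_m / Im dⁿ⁻¹_m`, computed from the degree-`m` part of the
normalized cobar complex of `C` (for `n = 0` there is nothing to quotient by). -/
abbrev ExtGrp (Δp : C →ₗ[k] C ⊗[k] C) : (n m : ℕ) → Type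
  | 0, m => ↥(LinearMap.ker (cobarD k C Δp 0) ⊓ omega k 𝒞 0 m)
  | (n+1), m =>
      ↥(LinearMap.ker (cobarD k C Δp (n+1)) ⊓ omega k 𝒞 (n+1) m) ⧸
        (Submodule.comap (LinearMap.ker (cobarD k C Δp (n+1)) ⊓ omega k 𝒞 (n+1) m).subtype
          (Submodule.map (cobarD k C Δp n) (omega k 𝒞 n m)))

/-- The subspace `V^{⊗i} ⊗ K ⊗ V^{⊗(n-i)}` of `V^{⊗(n+2)}` (the subspace `K ⊆ V ⊗ V`
inserted at the `(i+1)`-st position). -/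
def insertK {V : Type} [AddCommGroup V] [Module k V] (K : Submodule k (V ⊗[k] V)) :
    (n i : ℕ) → Submodule k ↥(TP k V (n+2))
  | 0, 0 => K
  | 0, (_+1) => ⊥
  | (n+1), 0 => Submodule.map (TensorProduct.assoc k V V ↥(TP k V (n+1))).toLinearMap
      (LinearMap.range (TensorProduct.map K.subtype (LinearMap.id (M := ↥(TP k V (n+1))))))
  | (n+1), (i+1) =>
      LinearMap.range (TensorProduct.map (LinearMap.id (M := V)) (insertK K n i).subtype)

variable [DirectSum.Decomposition 𝒞]

/-- The iterated comultiplication `Δ(m) : Cₘ → C₁^{⊗m}`, with `Δ(1) = id` (realized on all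
of `C` via the projection onto `C₁`) and `Δ(m) = (id ⊗ Δ(m-1)) ∘ Δ_{1,m-1}`. -/
def deltaIter (D : GradedCoalgebraData k C 𝒞) : (m : ℕ) → (C →ₗ[k] ↥(TP k ↥(𝒞 1) m))
  | 0 => 0
  | 1 => (DirectSum.component k ℕ (fun i => ↥(𝒞 i)) 1).comp
      (DirectSum.decomposeLinearEquiv 𝒞).toLinearMap
  | (n+2) => (TensorProduct.map LinearMap.id ((deltaIter D (n+1)).comp (𝒞 (n+1)).subtype)).comp
      (D.Δc 1 (n+1))

/-- `C̃_m = ⋂_{p=1}^{m-1} C₁^{⊗(p-1)} ⊗ Im Δ_{1,1} ⊗ C₁^{⊗(m-p-1)}` for `m = j+2`. -/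
def Ctilde (D : GradedCoalgebraData k C 𝒞) (j : ℕ) : Submodule k ↥(TP k ↥(𝒞 1) (j+2)) :=
  ⨅ i ∈ Finset.range (j+1), insertK k (Submodule.map (D.Δc 1 1) (𝒞 2)) j i

/-- `C` is *quadratic*: for every `m = j+2 ≥ 2` the iterated comultiplication
`Δ(m) : Cₘ → C₁^{⊗m}` is injective with image `C̃_m`. -/
def CoalgQuadratic (D : GradedCoalgebraData k C 𝒞) : Prop :=
  ∀ j : ℕ, (∀ x ∈ 𝒞 (j+2), deltaIter k C 𝒞 D (j+2) x = 0 → x = 0) ∧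
    Submodule.map (deltaIter k C 𝒞 D (j+2)) (𝒞 (j+2)) = Ctilde k C 𝒞 D j

section Quadraticity

section TensorGeneralities

variable {R : Type*} [CommRing R]
variable {A B M N W X Y : Type*} [AddCommGroup A] [Module R A] [AddCommGroup B] [Module R B]
  [AddCommGroup M] [Module R M] [AddCommGroup N] [Module R N]
  [AddCommGroup W] [Module R W] [AddCommGroup X] [Module R X] [AddCommGroup Y] [Module R Y]

lemma mem_range_lTensor_subtype_iff {ι : Type*} [DecidableEq ι] (b : Module.Basis ι R M)
    (S : Submodule R N) (t : M ⊗[R] N) :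
    t ∈ LinearMap.range (S.subtype.lTensor M) ↔ ∀ i, equivFinsuppOfBasisLeft b t i ∈ S := by
  constructor
  · rintro ⟨s, rfl⟩ i
    induction s with
    | zero => simp
    | tmul m x => simpa using S.smul_mem _ x.2
    | add s s' hs hs' => simpa using S.add_mem hs hs'
  · intro h
    rw [← (equivFinsuppOfBasisLeft b).symm_apply_apply t, equivFinsuppOfBasisLeft_symm_apply]
    exact Submodule.sum_mem _ fun i _ ↦ ⟨b i ⊗ₜ ⟨_, h i⟩, by simp⟩

lemma range_lTensor_iInf [Module.Free R M] {ι : Sort*} (S : ι → Submodule R N) :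
    LinearMap.range ((⨅ i, S i).subtype.lTensor M) =
      ⨅ i, LinearMap.range ((S i).subtype.lTensor M) := by
  classical
  ext t
  simp only [Submodule.mem_iInf, mem_range_lTensor_subtype_iff (Module.Free.chooseBasis R M)]
  exact forall_comm

lemma ker_lTensor_iInf [Module.Free R M] {ι : Sort*} {Q : ι → Type*}
    [∀ i, AddCommGroup (Q i)] [∀ i, Module R (Q i)] (f : ∀ i, N →ₗ[R] Q i)
    (hf : ⨅ i, LinearMap.ker (f i) = ⊥) : ⨅ i, LinearMap.ker ((f i).lTensor M) = ⊥ := by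
  have hker (i) : LinearMap.ker ((f i).lTensor M) =
      LinearMap.range ((LinearMap.ker (f i)).subtype.lTensor M) :=
    (Module.Flat.lTensor_exact M (LinearMap.exact_subtype_ker_map (f i))).linearMap_ker_eq
  simp_rw [hker]
  rw [← range_lTensor_iInf, hf, LinearMap.range_eq_bot]
  exact Subsingleton.elim _ _

lemma ker_map_iInf [Module.Free R M] {ι κ : Sort*} {P : ι → Type*}
    [∀ i, AddCommGroup (P i)] [∀ i, Module R (P i)] [∀ i, Module.Free R (P i)]
    {Q : κ → Type*} [∀ j, AddCommGroup (Q j)] [∀ j, Module R (Q j)] [Module.Free R N]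
    (f : ∀ i, M →ₗ[R] P i) (g : ∀ j, N →ₗ[R] Q j)
    (hf : ⨅ i, LinearMap.ker (f i) = ⊥) (hg : ⨅ j, LinearMap.ker (g j) = ⊥) :
    ⨅ i, ⨅ j, LinearMap.ker (TensorProduct.map (f i) (g j)) = ⊥ := by
  have hf' := ker_lTensor_iInf (M := N) f hf
  refine (Submodule.eq_bot_iff _).2 fun t ht ↦ ?_
  simp only [Submodule.mem_iInf, LinearMap.mem_ker] at ht
  have hrTensor (i) : (f i).rTensor N t = 0 := by
    rw [← Submodule.mem_bot R, ← ker_lTensor_iInf (M := P i) g hg, Submodule.mem_iInf]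
    intro j
    rw [LinearMap.mem_ker, ← LinearMap.comp_apply, LinearMap.lTensor_comp_rTensor, ht]
  rw [← (TensorProduct.comm R M N).map_eq_zero_iff, ← Submodule.mem_bot R, ← hf',
    Submodule.mem_iInf]
  intro i
  rw [LinearMap.mem_ker, LinearMap.lTensor_comm, hrTensor, map_zero]

lemma mem_range_lTensor_comp_iff
    (f : M →ₗ[R] N) (g : X →ₗ[R] A ⊗[R] M) {p : A ⊗[R] N → Prop}
    (hp : ∀ y, p (f.lTensor A y) ↔ y ∈ LinearMap.range g) (t : A ⊗[R] N) :
    t ∈ LinearMap.range (f.lTensor A ∘ₗ g) ↔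
      p t ∧ t ∈ LinearMap.range ((LinearMap.range f).subtype.lTensor A) := by
  rw [← LinearMap.lTensor_range]
  constructor
  · rintro ⟨x, rfl⟩
    exact ⟨(hp _).2 ⟨x, rfl⟩, g x, rfl⟩
  · rintro ⟨ht, y, rfl⟩
    obtain ⟨x, rfl⟩ := (hp y).1 ht
    exact ⟨x, rfl⟩

/-- The map `f ⊗ id : X ⊗ W → (A ⊗ B) ⊗ W ≃ A ⊗ (B ⊗ W)`, with right-nested target as in the cobar
complex. -/
def assocRTensor (W : Type*) [AddCommGroup W] [Module R W] (f : X →ₗ[R] A ⊗[R] B) :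
    X ⊗[R] W →ₗ[R] A ⊗[R] (B ⊗[R] W) :=
  (TensorProduct.assoc R A B W).toLinearMap.comp (f.rTensor W)

/-- The map `g ⊗ id : A ⊗ (B ⊗ W) ≃ (A ⊗ B) ⊗ W → X ⊗ W`, with right-nested source. -/
def rTensorAssocSymm (W : Type*) [AddCommGroup W] [Module R W] (g : A ⊗[R] B →ₗ[R] X) :
    A ⊗[R] (B ⊗[R] W) →ₗ[R] X ⊗[R] W :=
  (g.rTensor W).comp (TensorProduct.assoc R A B W).symm.toLinearMap

lemma assocRTensor_injective [Module.Flat R W] {f : X →ₗ[R] A ⊗[R] B}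
    (hf : Function.Injective f) : Function.Injective (assocRTensor W f) :=
  (TensorProduct.assoc R A B W).injective.comp
    (Module.Flat.rTensor_preserves_injective_linearMap f hf)

lemma assocRTensor_lTensor (f : X →ₗ[R] A ⊗[R] B) (g : W →ₗ[R] Y) (t : X ⊗[R] W) :
    assocRTensor Y f (g.lTensor X t) = (g.lTensor B).lTensor A (assocRTensor W f t) := by
  have h : TensorProduct.assoc R A B Y ∘ₗ g.lTensor (A ⊗[R] B) =
      (g.lTensor B).lTensor A ∘ₗ TensorProduct.assoc R A B W :=
    TensorProduct.ext_threefold fun _ _ _ ↦ rfl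
  simpa [assocRTensor, ← LinearMap.comp_apply, ← LinearMap.comp_assoc] using
    LinearMap.congr_fun h (f.rTensor W t)

lemma assocRTensor_lTensor_comp (f : X →ₗ[R] A ⊗[R] B) (g : B →ₗ[R] Y) (t : X ⊗[R] W) :
    assocRTensor W (g.lTensor A ∘ₗ f) t = (g.rTensor W).lTensor A (assocRTensor W f t) := by
  have h : TensorProduct.assoc R A Y W ∘ₗ (g.lTensor A).rTensor W =
      (g.rTensor W).lTensor A ∘ₗ TensorProduct.assoc R A B W :=
    TensorProduct.ext_threefold fun _ _ _ ↦ rfl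
  simpa [assocRTensor, LinearMap.rTensor_comp] using LinearMap.congr_fun h (f.rTensor W t)

lemma assocRTensor_assocRTensor (f : X →ₗ[R] A ⊗[R] B) (h : Y →ₗ[R] X ⊗[R] N) (t : Y ⊗[R] W) :
    assocRTensor (N ⊗[R] W) f (assocRTensor W h t) =
      (TensorProduct.assoc R B N W).toLinearMap.lTensor A
        (assocRTensor W (assocRTensor N f ∘ₗ h) t) := by
  have hf : assocRTensor (N ⊗[R] W) f ∘ₗ TensorProduct.assoc R X N W =
      (TensorProduct.assoc R B N W).toLinearMap.lTensor A ∘ₗ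
        assocRTensor W (assocRTensor N f) := by
    refine TensorProduct.ext_threefold fun x n w ↦ ?_
    simp only [assocRTensor, LinearMap.comp_apply, LinearMap.rTensor_tmul, LinearEquiv.coe_coe,
      assoc_tmul]
    induction f x with
    | zero => simp
    | add z z' hz hz' => simp only [add_tmul, map_add, hz, hz']
    | tmul a b => simp
  simpa [assocRTensor, LinearMap.rTensor_comp] using LinearMap.congr_fun hf (h.rTensor W t)

lemma rTensorAssocSymm_lTensor_lTensor (g : A ⊗[R] B →ₗ[R] X) (h : W →ₗ[R] Y)
    (t : A ⊗[R] (B ⊗[R] W)) :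
    rTensorAssocSymm Y g ((h.lTensor B).lTensor A t) = h.lTensor X (rTensorAssocSymm W g t) := by
  have key : rTensorAssocSymm Y g ∘ₗ (h.lTensor B).lTensor A =
      h.lTensor X ∘ₗ rTensorAssocSymm W g :=
    TensorProduct.ext_threefold' fun _ _ _ ↦ by simp [rTensorAssocSymm]
  exact LinearMap.congr_fun key t

lemma rTensorAssocSymm_comp_lTensor (g : A ⊗[R] B →ₗ[R] X) (h : Y →ₗ[R] B)
    (t : A ⊗[R] (Y ⊗[R] W)) :
    rTensorAssocSymm W (g ∘ₗ h.lTensor A) t =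
      rTensorAssocSymm W g ((h.rTensor W).lTensor A t) := by
  have key : rTensorAssocSymm W (g ∘ₗ h.lTensor A) =
      rTensorAssocSymm W g ∘ₗ (h.rTensor W).lTensor A :=
    TensorProduct.ext_threefold' fun _ _ _ ↦ by simp [rTensorAssocSymm]
  exact LinearMap.congr_fun key t

lemma assoc_rTensorAssocSymm_rTensorAssocSymm (g : A ⊗[R] B →ₗ[R] X)
    (t : A ⊗[R] ((B ⊗[R] N) ⊗[R] W)) :
    TensorProduct.assoc R X N W (rTensorAssocSymm W (rTensorAssocSymm N g) t) =
      rTensorAssocSymm (N ⊗[R] W) g ((TensorProduct.assoc R B N W).toLinearMap.lTensor A t) := by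
  have key : TensorProduct.assoc R X N W ∘ₗ rTensorAssocSymm W (rTensorAssocSymm N g) =
      rTensorAssocSymm (N ⊗[R] W) g ∘ₗ (TensorProduct.assoc R B N W).toLinearMap.lTensor A := by
    ext a b n w
    simp [rTensorAssocSymm]
  exact LinearMap.congr_fun key t

lemma rTensorAssocSymm_assocRTensor (f : Y →ₗ[R] A ⊗[R] B) (g : A ⊗[R] B →ₗ[R] X)
    (t : Y ⊗[R] W) :
    rTensorAssocSymm W g (assocRTensor W f t) = (g ∘ₗ f).rTensor W t := by
  simp [rTensorAssocSymm, assocRTensor, LinearMap.rTensor_comp]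

lemma exact_assocRTensor_rTensorAssocSymm [Module.Flat R W] {f : X →ₗ[R] A ⊗[R] B}
    {g : A ⊗[R] B →ₗ[R] Y} (hfg : Function.Exact f g) :
    Function.Exact (assocRTensor W f) (rTensorAssocSymm W g) :=
  (LinearEquiv.conj_exact_iff_exact _ _ (TensorProduct.assoc R A B W)).2
    (Module.Flat.rTensor_exact W hfg)

end TensorGeneralities

variable {k C}

section HomogeneousPart

variable {R ι M N : Type*} [Semiring R] [DecidableEq ι] [AddCommMonoid M] [Module R M]
  [AddCommMonoid N] [Module R N] (ℳ : ι → Submodule R M) [DirectSum.Decomposition ℳ]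

/-- The projection of `M = ⨁ i, ℳ i` onto its `n`-th homogeneous component. -/
def homogeneousPart (n : ι) : M →ₗ[R] ℳ n :=
  DirectSum.component R ι (fun i ↦ ↥(ℳ i)) n ∘ₗ (DirectSum.decomposeLinearEquiv ℳ).toLinearMap

lemma homogeneousPart_comp_subtype (n : ι) :
    homogeneousPart ℳ n ∘ₗ (ℳ n).subtype = LinearMap.id := by
  ext x
  simp [homogeneousPart, DirectSum.component.lof_self]

lemma homogeneousPart_comp_subtype_of_ne {m n : ι} (h : m ≠ n) :
    homogeneousPart ℳ n ∘ₗ (ℳ m).subtype = 0 := by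
  ext x
  simp [homogeneousPart, DirectSum.component.of, h]

lemma iInf_ker_homogeneousPart : ⨅ n, LinearMap.ker (homogeneousPart ℳ n) = ⊥ := by
  refine (Submodule.eq_bot_iff _).2 fun x hx ↦ (DirectSum.decompose ℳ).injective ?_
  rw [DirectSum.decompose_zero]
  exact DFinsupp.ext ((Submodule.mem_iInf _).1 hx)

variable {ℳ}

lemma linearMap_ext_homogeneous {f g : M →ₗ[R] N}
    (h : ∀ n, f ∘ₗ (ℳ n).subtype = g ∘ₗ (ℳ n).subtype) : f = g := by
  ext x
  induction x using DirectSum.Decomposition.inductionOn ℳ with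
  | zero => simp
  | homogeneous x => exact LinearMap.congr_fun (h _) x
  | add x y hx hy => simp only [map_add, hx, hy]

end HomogeneousPart

section TensorHomogeneousPart

variable {V : Type*} [AddCommGroup V] [Module k V] {𝒱 : ℕ → Submodule k V}
  [DirectSum.Decomposition 𝒱]

lemma map_homogeneousPart_map_subtype {p q : ℕ} (t : 𝒱 p ⊗[k] 𝒱 q) :
    map (homogeneousPart 𝒱 p) (homogeneousPart 𝒱 q) (map (𝒱 p).subtype (𝒱 q).subtype t) = t := by
  rw [← LinearMap.comp_apply, ← map_comp, homogeneousPart_comp_subtype,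
    homogeneousPart_comp_subtype, map_id, LinearMap.id_apply]

lemma map_homogeneousPart_map_subtype_of_ne {i j p q : ℕ} (h : i ≠ p ∨ j ≠ q)
    (t : 𝒱 i ⊗[k] 𝒱 j) :
    map (homogeneousPart 𝒱 p) (homogeneousPart 𝒱 q) (map (𝒱 i).subtype (𝒱 j).subtype t) = 0 := by
  rw [← LinearMap.comp_apply, ← map_comp]
  obtain hp | hq := h
  · rw [homogeneousPart_comp_subtype_of_ne 𝒱 hp, map_zero_left, LinearMap.zero_apply]
  · rw [homogeneousPart_comp_subtype_of_ne 𝒱 hq, map_zero_right, LinearMap.zero_apply]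

lemma map_homogeneousPart_sum_antidiagonal (w : ∀ p q, 𝒱 p ⊗[k] 𝒱 q) (m p q : ℕ) :
    map (homogeneousPart 𝒱 p) (homogeneousPart 𝒱 q)
        (∑ ij ∈ Finset.HasAntidiagonal.antidiagonal m,
          map (𝒱 ij.1).subtype (𝒱 ij.2).subtype (w ij.1 ij.2)) =
      if p + q = m then w p q else 0 := by
  have hmap_of_ne (ij : ℕ × ℕ) (hij : ij ≠ (p, q)) :
      map (homogeneousPart 𝒱 p) (homogeneousPart 𝒱 q)
        (map (𝒱 ij.1).subtype (𝒱 ij.2).subtype (w ij.1 ij.2)) = 0 :=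
    map_homogeneousPart_map_subtype_of_ne (by grind) _
  rw [map_sum]
  split_ifs with hm
  · rw [Finset.sum_eq_single_of_mem (p, q) (by simpa) fun ij _ ↦ hmap_of_ne ij,
      map_homogeneousPart_map_subtype]
  · exact Finset.sum_eq_zero fun ij hij ↦ hmap_of_ne ij fun h ↦ hm (by simpa [h] using hij)

lemma eq_of_map_map_homogeneousPart_eq {z z' : V ⊗[k] (V ⊗[k] V)}
    (h : ∀ p q r, map (homogeneousPart 𝒱 p) (map (homogeneousPart 𝒱 q) (homogeneousPart 𝒱 r)) z =
      map (homogeneousPart 𝒱 p) (map (homogeneousPart 𝒱 q) (homogeneousPart 𝒱 r)) z') : z = z' := by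
  have hker₁ := iInf_ker_homogeneousPart 𝒱
  have hker₂ : ⨅ qr : ℕ × ℕ, LinearMap.ker
      (map (homogeneousPart 𝒱 qr.1) (homogeneousPart 𝒱 qr.2)) = ⊥ := by
    rw [iInf_prod]
    exact ker_map_iInf _ _ hker₁ hker₁
  rw [← sub_eq_zero, ← Submodule.mem_bot k, ← ker_map_iInf _ _ hker₁ hker₂]
  simp [Submodule.mem_iInf, h]

end TensorHomogeneousPart

namespace GradedCoalgebraData

variable {𝒞} (D : GradedCoalgebraData k C 𝒞)

lemma Δc_eq_map_homogeneousPart_comul (p q : ℕ) :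
    D.Δc p q = map (homogeneousPart 𝒞 p) (homogeneousPart 𝒞 q) ∘ₗ Coalgebra.comul := by
  refine linearMap_ext_homogeneous (ℳ := 𝒞) fun n ↦ LinearMap.ext fun x ↦ ?_
  simp only [LinearMap.comp_apply, Submodule.subtype_apply, D.hΔc n x x.2, map_sum]
  by_cases hn : n = p + q
  · obtain rfl : q = n - p := by lia
    rw [Finset.sum_eq_single_of_mem p (by simp only [Finset.mem_range]; lia) fun i _ hi ↦
      map_homogeneousPart_map_subtype_of_ne (.inl hi) _, map_homogeneousPart_map_subtype]
  · rw [D.hΔc0 p q n hn x x.2, Finset.sum_eq_zero]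
    exact fun i hi ↦ map_homogeneousPart_map_subtype_of_ne (by grind) _

/-- The component `Δ_{p,q} : C_n → C_p ⊗ C_q`, meant for `n = p + q`. Keeping `n` as a separate
argument avoids transporting tensors along equalities of degrees. -/
def comul (p q n : ℕ) : 𝒞 n →ₗ[k] 𝒞 p ⊗[k] 𝒞 q :=
  D.Δc p q ∘ₗ (𝒞 n).subtype

lemma comul_comp_homogeneousPart {p q n : ℕ} (hn : p + q = n) :
    D.comul p q n ∘ₗ homogeneousPart 𝒞 n = D.Δc p q := by
  refine linearMap_ext_homogeneous (ℳ := 𝒞) fun m ↦ ?_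
  rw [LinearMap.comp_assoc]
  obtain rfl | hm := eq_or_ne m n
  · rw [homogeneousPart_comp_subtype, LinearMap.comp_id, comul]
  · rw [homogeneousPart_comp_subtype_of_ne 𝒞 hm]
    ext x
    simp [D.hΔc0 p q m (hn ▸ hm) x x.2]

lemma coassoc {p q r s s' : ℕ} (hs : p + q = s) (hs' : q + r = s') (n : ℕ) :
    assocRTensor (𝒞 r) (D.comul p q s) ∘ₗ D.comul s r n =
      (D.comul q r s').lTensor (𝒞 p) ∘ₗ D.comul p s' n := by
  ext x
  change assocRTensor _ _ (D.Δc s r x) = LinearMap.lTensor _ _ (D.Δc p s' x)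
  rw [D.Δc_eq_map_homogeneousPart_comul s r, D.Δc_eq_map_homogeneousPart_comul p s']
  simp only [LinearMap.comp_apply, assocRTensor, LinearEquiv.coe_coe, LinearMap.rTensor_map,
    LinearMap.lTensor_map, D.comul_comp_homogeneousPart hs, D.comul_comp_homogeneousPart hs',
    Δc_eq_map_homogeneousPart_comul]
  rw [← LinearMap.map_comp_rTensor, ← LinearMap.map_comp_lTensor, LinearMap.comp_apply,
    LinearMap.comp_apply, ← map_map_assoc, Coalgebra.coassoc_apply]

lemma coassoc_apply {p q r s s' n : ℕ} (hs : p + q = s) (hs' : q + r = s') (x : 𝒞 n) :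
    assocRTensor (𝒞 r) (D.comul p q s) (D.comul s r n x) =
      (D.comul q r s').lTensor (𝒞 p) (D.comul p s' n x) :=
  LinearMap.congr_fun (D.coassoc hs hs' n) x

omit [DirectSum.Decomposition 𝒞] in
variable {D} in
lemma comul_injective (hD : D.Strong) {p q n : ℕ}
    (hn : p + q = n) : Function.Injective (D.comul p q n) := by
  subst hn
  exact (injective_iff_map_eq_zero _).2 fun x hx ↦ Subtype.ext (hD p q x x.2 hx)

/-- The grouplike element of `C`, as an element of `C₀`. -/
def unit : 𝒞 0 := ⟨D.g, D.hC0 ▸ Submodule.mem_span_singleton_self D.g⟩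

lemma homogeneousPart_zero :
    homogeneousPart 𝒞 0 = LinearMap.toSpanSingleton k (𝒞 0) D.unit ∘ₗ Coalgebra.counit := by
  refine linearMap_ext_homogeneous (ℳ := 𝒞) fun n ↦ ?_
  obtain rfl | hn := eq_or_ne n 0
  · rw [homogeneousPart_comp_subtype]
    ext ⟨x, hx⟩
    obtain ⟨c, rfl⟩ := Submodule.mem_span_singleton.1 (D.hC0 ▸ hx)
    simp [unit, D.hcu]
  · rw [homogeneousPart_comp_subtype_of_ne 𝒞 hn]
    ext x
    simp [D.hcounit n (by lia) x x.2]

lemma Δc_zero_left (n : ℕ) (x : C) : D.Δc 0 n x = D.unit ⊗ₜ homogeneousPart 𝒞 n x := by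
  rw [Δc_eq_map_homogeneousPart_comul, D.homogeneousPart_zero, LinearMap.comp_apply,
    ← LinearMap.map_comp_rTensor, LinearMap.comp_apply, Coalgebra.rTensor_counit_comul]
  simp

lemma Δc_zero_right (n : ℕ) (x : C) : D.Δc n 0 x = homogeneousPart 𝒞 n x ⊗ₜ D.unit := by
  rw [Δc_eq_map_homogeneousPart_comul, D.homogeneousPart_zero, LinearMap.comp_apply,
    ← LinearMap.map_comp_lTensor, LinearMap.comp_apply, Coalgebra.lTensor_counit_comul]
  simp

lemma comul_zero_left (n : ℕ) (x : 𝒞 n) : D.comul 0 n n x = D.unit ⊗ₜ x := by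
  rw [comul, LinearMap.comp_apply, Δc_zero_left, ← LinearMap.comp_apply,
    homogeneousPart_comp_subtype, LinearMap.id_apply]

lemma comul_zero_right (n : ℕ) (x : 𝒞 n) : D.comul n 0 n x = x ⊗ₜ D.unit := by
  rw [comul, LinearMap.comp_apply, Δc_zero_right, ← LinearMap.comp_apply,
    homogeneousPart_comp_subtype, LinearMap.id_apply]

/-- The subspace `Im Δ_{1,1} ⊆ C₁ ⊗ C₁` of quadratic relations, whose insertions cut out `C̃`. -/
def relations : Submodule k (𝒞 1 ⊗[k] 𝒞 1) := Submodule.map (D.Δc 1 1) (𝒞 2)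

/-- The map `C₁ ⊗ C_{n+1} → C₁ ⊗ C₁ ⊗ C_n → (C₁ ⊗ C₁ ⧸ Im Δ_{1,1}) ⊗ C_n`. -/
def relationMap (n : ℕ) :
    𝒞 1 ⊗[k] 𝒞 (n + 1) →ₗ[k] (𝒞 1 ⊗[k] 𝒞 1 ⧸ D.relations) ⊗[k] 𝒞 n :=
  rTensorAssocSymm (𝒞 n) D.relations.mkQ ∘ₗ (D.comul 1 n (n + 1)).lTensor (𝒞 1)

omit [DirectSum.Decomposition 𝒞] in
lemma range_comul_one_one : LinearMap.range (D.comul 1 1 2) = D.relations := by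
  rw [relations, comul, LinearMap.range_comp, Submodule.range_subtype]

omit [DirectSum.Decomposition 𝒞] in
lemma exact_comul_one_one : Function.Exact (D.comul 1 1 2) D.relations.mkQ := by
  rw [LinearMap.exact_iff, Submodule.ker_mkQ, range_comul_one_one]

lemma relationMap_comul (n : ℕ) (x : 𝒞 (n + 2)) :
    D.relationMap n (D.comul 1 (n + 1) (n + 2) x) = 0 := by
  rw [relationMap, LinearMap.comp_apply, ← D.coassoc_apply (p := 1) (q := 1) rfl (Nat.add_comm 1 n),
    rTensorAssocSymm_assocRTensor, D.exact_comul_one_one.linearMap_comp_eq_zero,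
    LinearMap.rTensor_zero, LinearMap.zero_apply]

lemma exact_relationMap_zero : Function.Exact (D.comul 1 1 2) (D.relationMap 0) := by
  have h (t) : D.relationMap 0 t = D.relations.mkQ t ⊗ₜ D.unit := by
    induction t with
    | zero => simp
    | add t t' ht ht' => simp only [map_add, add_tmul, ht, ht']
    | tmul u v => simp [relationMap, rTensorAssocSymm, comul_zero_right]
  intro t
  rw [← D.exact_comul_one_one t, h]
  refine ⟨fun ht ↦ ?_, fun ht ↦ by simp [ht]⟩
  simpa [unit, D.hcu] using congrArg (fun z ↦ TensorProduct.rid k _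
    ((Coalgebra.counit ∘ₗ (𝒞 0).subtype).lTensor _ z)) ht

end GradedCoalgebraData

section Insertion

variable {V : Type} [AddCommGroup V] [Module k V]

lemma mem_insertK_succ_zero (K : Submodule k (V ⊗[k] V)) (n : ℕ)
    (t : V ⊗[k] (V ⊗[k] TP k V (n + 1))) :
    t ∈ (insertK k K (n + 1) 0 : Submodule k (V ⊗[k] (V ⊗[k] TP k V (n + 1)))) ↔
      rTensorAssocSymm (TP k V (n + 1)) K.mkQ t = 0 := by
  rw [exact_assocRTensor_rTensorAssocSymm (LinearMap.exact_subtype_mkQ K) t]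
  exact SetLike.ext_iff.1 (LinearMap.range_comp _ _).symm t

lemma forall_mem_insertK_succ (K : Submodule k (V ⊗[k] V)) (n : ℕ) (t : V ⊗[k] TP k V (n + 2)) :
    (∀ i < n + 2, t ∈ insertK k K (n + 1) i) ↔ t ∈ insertK k K (n + 1) 0 ∧
      t ∈ LinearMap.range ((⨅ i ∈ Finset.range (n + 1), insertK k K n i).subtype.lTensor V) := by
  simp only [Finset.mem_range, range_lTensor_iInf, Submodule.mem_iInf]
  exact Nat.forall_lt_succ_left'

end Insertion

namespace GradedCoalgebraData

variable {𝒞} (D : GradedCoalgebraData k C 𝒞)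

/-- The iterated comultiplication `Δ(m) : C_m → C₁^{⊗m}`, as a map on `C_m` rather than on `C`. -/
def iterComul (m : ℕ) : 𝒞 m →ₗ[k] TP k (𝒞 1) m :=
  deltaIter k C 𝒞 D m ∘ₗ (𝒞 m).subtype

lemma iterComul_one : D.iterComul 1 = LinearMap.id :=
  homogeneousPart_comp_subtype 𝒞 1

lemma iterComul_add_two (n : ℕ) : D.iterComul (n + 2) =
    (D.iterComul (n + 1)).lTensor (𝒞 1) ∘ₗ D.comul 1 (n + 1) (n + 2) :=
  rfl

variable {D} in
lemma iterComul_injective (hD : D.Strong) (n : ℕ) :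
    Function.Injective (D.iterComul (n + 1)) := by
  induction n with
  | zero => exact D.iterComul_one ▸ Function.injective_id
  | succ n ih =>
    rw [iterComul_add_two]
    exact (Module.Flat.lTensor_preserves_injective_linearMap _ ih).comp
      (comul_injective hD (Nat.add_comm 1 _))

variable {D} in
lemma lTensor_iterComul_mem_insertK_iff (hD : D.Strong) (n : ℕ)
    (y : 𝒞 1 ⊗[k] 𝒞 (n + 2)) :
    (D.iterComul (n + 2)).lTensor (𝒞 1) y ∈ insertK k D.relations (n + 1) 0 ↔
      D.relationMap (n + 1) y = 0 := by
  have hinj : Function.Injective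
      ((D.iterComul (n + 1)).lTensor (𝒞 1 ⊗[k] 𝒞 1 ⧸ D.relations)) :=
    Module.Flat.lTensor_preserves_injective_linearMap _ (iterComul_injective hD n)
  have h : rTensorAssocSymm (TP k (𝒞 1) (n + 1)) D.relations.mkQ
      (((D.iterComul (n + 1)).lTensor (𝒞 1) ∘ₗ D.comul 1 (n + 1) (n + 2)).lTensor (𝒞 1) y) =
      (D.iterComul (n + 1)).lTensor _ (D.relationMap (n + 1) y) := by
    rw [LinearMap.lTensor_comp_apply, rTensorAssocSymm_lTensor_lTensor]
    rfl
  rw [← map_eq_zero_iff _ hinj, ← h]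
  exact mem_insertK_succ_zero D.relations n _

omit [DirectSum.Decomposition 𝒞] in
lemma mem_Ctilde_iff {j : ℕ} {t : TP k (𝒞 1) (j + 2)} :
    t ∈ Ctilde k C 𝒞 D j ↔ ∀ i < j + 1, t ∈ insertK k D.relations j i := by
  simp only [Ctilde, Submodule.mem_iInf, Finset.mem_range, relations]

omit [DirectSum.Decomposition 𝒞] in
lemma mem_Ctilde_succ_iff {j : ℕ} {t : 𝒞 1 ⊗[k] TP k (𝒞 1) (j + 2)} :
    t ∈ Ctilde k C 𝒞 D (j + 1) ↔ t ∈ insertK k D.relations (j + 1) 0 ∧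
      t ∈ LinearMap.range ((Ctilde k C 𝒞 D j).subtype.lTensor (𝒞 1)) :=
  D.mem_Ctilde_iff.trans (forall_mem_insertK_succ D.relations j t)

variable {D} in
lemma range_iterComul (hD : D.Strong)
    (hexact : ∀ n, Function.Exact (D.comul 1 (n + 1) (n + 2)) (D.relationMap n)) (j : ℕ) :
    LinearMap.range (D.iterComul (j + 2)) = Ctilde k C 𝒞 D j := by
  induction j with
  | zero =>
    have htwo : D.iterComul 2 = D.comul 1 1 2 := LinearMap.ext fun x ↦ LinearMap.congr_fun
      ((congrArg (LinearMap.lTensor (𝒞 1)) D.iterComul_one).trans (LinearMap.lTensor_id _ _)) _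
    ext t
    rw [htwo, mem_Ctilde_iff]
    simp only [zero_add, Nat.lt_one_iff, forall_eq]
    exact SetLike.ext_iff.1 D.range_comul_one_one t
  | succ j ih =>
    ext t
    refine Iff.trans ?_ D.mem_Ctilde_succ_iff.symm
    rw [← ih]
    exact mem_range_lTensor_comp_iff _ _ (fun y ↦
      (lTensor_iterComul_mem_insertK_iff hD j y).trans (hexact (j + 1) y)) t

variable {D} in
lemma coalgQuadratic_of_exact (hD : D.Strong)
    (hexact : ∀ n, Function.Exact (D.comul 1 (n + 1) (n + 2)) (D.relationMap n)) :
    CoalgQuadratic k C 𝒞 D := by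
  refine fun j ↦ ⟨fun x hx hx0 ↦ ?_, ?_⟩
  · have h0 : D.iterComul (j + 2) ⟨x, hx⟩ = 0 := hx0
    exact congrArg Subtype.val ((map_eq_zero_iff _ (iterComul_injective hD (j + 1))).1 h0)
  · rw [← range_iterComul hD hexact, iterComul, LinearMap.range_comp, Submodule.range_subtype]

end GradedCoalgebraData

section Cobar

variable {V : Type} [AddCommGroup V] [Module k V] (𝒱 : ℕ → Submodule k V)

lemma map_subtype_mem_omega_two {i j : ℕ} (hi : i ≠ 0) (hj : j ≠ 0) (t : 𝒱 i ⊗[k] 𝒱 j) :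
    map (𝒱 i).subtype (𝒱 j).subtype t ∈ omega k 𝒱 2 (i + j) := by
  have hle : 𝒱 j ≤ omega k 𝒱 1 (i + j - i) := by
    rw [Nat.add_sub_cancel_left]
    exact (if_neg hj).ge
  have hi' : i ∈ Finset.Icc 1 (i + j) := by
    rw [Finset.mem_Icc]
    lia
  exact le_iSup₂_of_le (f := fun p (_ : p ∈ Finset.Icc 1 (i + j)) ↦
    LinearMap.range (mapIncl (𝒱 p) (omega k 𝒱 1 (i + j - p)))) i hi'
    (range_mapIncl_mono le_rfl hle) ⟨t, rfl⟩

lemma omega_one_le (m : ℕ) : omega k 𝒱 1 m ≤ 𝒱 m := by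
  by_cases hm : m = 0
  · exact (if_pos hm).trans_le bot_le
  · exact (if_neg hm).le

lemma cobarD_one (Δp : V →ₗ[k] V ⊗[k] V) (x : V) : cobarD k V Δp 1 x = Δp x := by
  simp only [cobarD, zero_add, Finset.range_one, Finset.sum_singleton, pow_zero, one_smul]
  rfl

lemma cobarD_two (Δp : V →ₗ[k] V ⊗[k] V) (t : V ⊗[k] V) :
    cobarD k V Δp 2 t = assocRTensor V Δp t - Δp.lTensor V t := by
  simp only [cobarD, Finset.sum_range_succ, Finset.range_one, Finset.sum_singleton, pow_zero,
    pow_one, one_smul, neg_smul, sub_eq_add_neg]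
  rfl

lemma cobarD_two_eq_zero_iff {Δp : V →ₗ[k] V ⊗[k] V} {t : V ⊗[k] V} :
    cobarD k V Δp 2 t = 0 ↔ assocRTensor V Δp t = Δp.lTensor V t :=
  (iff_of_eq (congrArg (· = 0) (cobarD_two Δp t))).trans sub_eq_zero

omit [Coalgebra k C] [DirectSum.Decomposition 𝒞] in
variable {𝒞} in
lemma ker_inf_omega_le_of_subsingleton_extGrp {Δp : C →ₗ[k] C ⊗[k] C} {n m : ℕ}
    (h : Subsingleton (ExtGrp k C 𝒞 Δp (n + 1) m)) :
    LinearMap.ker (cobarD k C Δp (n + 1)) ⊓ omega k 𝒞 (n + 1) m ≤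
      Submodule.map (cobarD k C Δp n) (omega k 𝒞 n m) :=
  Submodule.comap_subtype_eq_top.1 (Submodule.Quotient.subsingleton_iff.1 h)

end Cobar

namespace GradedCoalgebraData

variable {𝒞} (D : GradedCoalgebraData k C 𝒞)

lemma homogeneousPart_g {p : ℕ} (hp : p ≠ 0) : homogeneousPart 𝒞 p D.g = 0 :=
  LinearMap.congr_fun (homogeneousPart_comp_subtype_of_ne 𝒞 hp.symm) D.unit

lemma map_homogeneousPart_deltaPlus (p q : ℕ) (x : C) :
    map (homogeneousPart 𝒞 p) (homogeneousPart 𝒞 q) (deltaPlus k C D.g x) =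
      D.Δc p q x - homogeneousPart 𝒞 p D.g ⊗ₜ homogeneousPart 𝒞 q x -
        homogeneousPart 𝒞 p x ⊗ₜ homogeneousPart 𝒞 q D.g := by
  simp [deltaPlus, Δc_eq_map_homogeneousPart_comul]

/-- The component `C_n → C_p ⊗ C_q` of the reduced comultiplication `Δ₊`. -/
def reducedComul (p q n : ℕ) : 𝒞 n →ₗ[k] 𝒞 p ⊗[k] 𝒞 q :=
  map (homogeneousPart 𝒞 p) (homogeneousPart 𝒞 q) ∘ₗ deltaPlus k C D.g ∘ₗ (𝒞 n).subtype

lemma reducedComul_of_ne_zero {p q : ℕ} (hp : p ≠ 0) (hq : q ≠ 0) (n : ℕ) :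
    D.reducedComul p q n = D.comul p q n := by
  ext x
  simp [reducedComul, comul, map_homogeneousPart_deltaPlus, D.homogeneousPart_g, hp, hq]

lemma reducedComul_zero_left {q : ℕ} (hq : q ≠ 0) (n : ℕ) : D.reducedComul 0 q n = 0 := by
  ext x
  have hg : homogeneousPart 𝒞 0 D.g = D.unit :=
    LinearMap.congr_fun (homogeneousPart_comp_subtype 𝒞 0) D.unit
  simp [reducedComul, map_homogeneousPart_deltaPlus, D.homogeneousPart_g hq, hg, Δc_zero_left]

lemma reducedComul_zero_right {p : ℕ} (hp : p ≠ 0) (n : ℕ) : D.reducedComul p 0 n = 0 := by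
  ext x
  have hg : homogeneousPart 𝒞 0 D.g = D.unit :=
    LinearMap.congr_fun (homogeneousPart_comp_subtype 𝒞 0) D.unit
  simp [reducedComul, map_homogeneousPart_deltaPlus, D.homogeneousPart_g hp, hg, Δc_zero_right]

lemma reducedComul_of_ne {p q n : ℕ} (hn : n ≠ p + q) : D.reducedComul p q n = 0 := by
  have hπ {i : ℕ} (hi : n ≠ i) (x : 𝒞 n) : homogeneousPart 𝒞 i x = 0 :=
    LinearMap.congr_fun (homogeneousPart_comp_subtype_of_ne 𝒞 hi) x
  have hleft (x : 𝒞 n) : homogeneousPart 𝒞 p D.g ⊗ₜ[k] homogeneousPart 𝒞 q x = 0 := by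
    by_cases hp : p = 0
    · rw [hπ (by lia), tmul_zero]
    · rw [D.homogeneousPart_g hp, zero_tmul]
  have hright (x : 𝒞 n) : homogeneousPart 𝒞 p x ⊗ₜ[k] homogeneousPart 𝒞 q D.g = 0 := by
    by_cases hq : q = 0
    · rw [hπ (by lia), zero_tmul]
    · rw [D.homogeneousPart_g hq, tmul_zero]
  ext x
  simp [reducedComul, map_homogeneousPart_deltaPlus, D.hΔc0 p q n hn x x.2, hleft, hright]

lemma reducedComul_comp_homogeneousPart (p q : ℕ) :
    D.reducedComul p q (p + q) ∘ₗ homogeneousPart 𝒞 (p + q) =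
      map (homogeneousPart 𝒞 p) (homogeneousPart 𝒞 q) ∘ₗ deltaPlus k C D.g := by
  refine linearMap_ext_homogeneous (ℳ := 𝒞) fun n ↦ ?_
  rw [LinearMap.comp_assoc, LinearMap.comp_assoc, ← reducedComul]
  obtain rfl | hn := eq_or_ne n (p + q)
  · rw [homogeneousPart_comp_subtype, LinearMap.comp_id]
  · rw [homogeneousPart_comp_subtype_of_ne 𝒞 hn, D.reducedComul_of_ne hn, LinearMap.comp_zero]

lemma map_map_homogeneousPart_assocRTensor_deltaPlus (p q r : ℕ) (t : C ⊗[k] C) :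
    map (homogeneousPart 𝒞 p) (map (homogeneousPart 𝒞 q) (homogeneousPart 𝒞 r))
        (assocRTensor C (deltaPlus k C D.g) t) =
      assocRTensor (𝒞 r) (D.reducedComul p q (p + q))
        (map (homogeneousPart 𝒞 (p + q)) (homogeneousPart 𝒞 r) t) := by
  simp only [assocRTensor, LinearMap.comp_apply, LinearEquiv.coe_coe, map_map_assoc]
  rw [LinearMap.map_rTensor, LinearMap.rTensor_map, reducedComul_comp_homogeneousPart]

lemma map_map_homogeneousPart_lTensor_deltaPlus (p q r : ℕ) (t : C ⊗[k] C) :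
    map (homogeneousPart 𝒞 p) (map (homogeneousPart 𝒞 q) (homogeneousPart 𝒞 r))
        ((deltaPlus k C D.g).lTensor C t) =
      (D.reducedComul q r (q + r)).lTensor (𝒞 p)
        (map (homogeneousPart 𝒞 p) (homogeneousPart 𝒞 (q + r)) t) := by
  rw [LinearMap.map_lTensor, LinearMap.lTensor_map, reducedComul_comp_homogeneousPart]

lemma cobarD_two_deltaPlus_eq_zero_iff {t : C ⊗[k] C} :
    cobarD k C (deltaPlus k C D.g) 2 t = 0 ↔
      ∀ p q r, assocRTensor (𝒞 r) (D.reducedComul p q (p + q))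
          (map (homogeneousPart 𝒞 (p + q)) (homogeneousPart 𝒞 r) t) =
        (D.reducedComul q r (q + r)).lTensor (𝒞 p)
          (map (homogeneousPart 𝒞 p) (homogeneousPart 𝒞 (q + r)) t) := by
  simp only [← map_map_homogeneousPart_assocRTensor_deltaPlus,
    ← map_map_homogeneousPart_lTensor_deltaPlus]
  exact cobarD_two_eq_zero_iff.trans ⟨fun h p q r ↦ by rw [h], eq_of_map_map_homogeneousPart_eq⟩

lemma assocRTensor_reducedComul_eq {m : ℕ} {w : ∀ p q, 𝒞 p ⊗[k] 𝒞 q}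
    (hw₀ : ∀ p q, p = 0 ∨ q = 0 → w p q = 0)
    (hw : ∀ p q r, p ≠ 0 → q ≠ 0 → r ≠ 0 → p + q + r = m →
      assocRTensor (𝒞 r) (D.comul p q (p + q)) (w (p + q) r) =
        (D.comul q r (q + r)).lTensor (𝒞 p) (w p (q + r)))
    {p q r : ℕ} (hm : p + q + r = m) :
    assocRTensor (𝒞 r) (D.reducedComul p q (p + q)) (w (p + q) r) =
      (D.reducedComul q r (q + r)).lTensor (𝒞 p) (w p (q + r)) := by
  rcases eq_or_ne p 0 with rfl | hp
  · rw [hw₀ 0 (q + r) (.inl rfl), map_zero]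
    rcases eq_or_ne q 0 with rfl | hq
    · rw [hw₀ _ _ (.inl rfl), map_zero]
    · simp [D.reducedComul_zero_left hq, assocRTensor]
  rcases eq_or_ne r 0 with rfl | hr
  · rw [hw₀ (p + q) 0 (.inr rfl), map_zero]
    rcases eq_or_ne q 0 with rfl | hq
    · rw [hw₀ _ _ (.inr rfl), map_zero]
    · simp [D.reducedComul_zero_right hq]
  rcases eq_or_ne q 0 with rfl | hq
  · simp [D.reducedComul_zero_left hr, D.reducedComul_zero_right hp, assocRTensor]
  · rw [D.reducedComul_of_ne_zero hp hq, D.reducedComul_of_ne_zero hq hr, hw p q r hp hq hr hm]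

lemma exists_comul_eq_of_subsingleton_extGrp {m : ℕ}
    (hExt : Subsingleton (ExtGrp k C 𝒞 (deltaPlus k C D.g) 2 m)) {w : ∀ p q, 𝒞 p ⊗[k] 𝒞 q}
    (hw₀ : ∀ p q, p = 0 ∨ q = 0 → w p q = 0)
    (hw : ∀ p q r, p ≠ 0 → q ≠ 0 → r ≠ 0 → p + q + r = m →
      assocRTensor (𝒞 r) (D.comul p q (p + q)) (w (p + q) r) =
        (D.comul q r (q + r)).lTensor (𝒞 p) (w p (q + r))) :
    ∃ x : 𝒞 m, ∀ p q, p ≠ 0 → q ≠ 0 → p + q = m → D.comul p q m x = w p q := by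
  let t : C ⊗[k] C := ∑ ij ∈ Finset.HasAntidiagonal.antidiagonal m,
    map (𝒞 ij.1).subtype (𝒞 ij.2).subtype (w ij.1 ij.2)
  have hcomponent (p q) : map (homogeneousPart 𝒞 p) (homogeneousPart 𝒞 q) t =
      if p + q = m then w p q else 0 := map_homogeneousPart_sum_antidiagonal w m p q
  have hmem : t ∈ omega k 𝒞 2 m := by
    refine Submodule.sum_mem _ fun ij hij ↦ ?_
    obtain rfl := Finset.HasAntidiagonal.mem_antidiagonal.1 hij
    by_cases h0 : ij.1 = 0 ∨ ij.2 = 0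
    · rw [hw₀ _ _ h0, map_zero]
      exact Submodule.zero_mem _
    · push Not at h0
      exact map_subtype_mem_omega_two 𝒞 h0.1 h0.2 _
  have hcocycle : cobarD k C (deltaPlus k C D.g) 2 t = 0 := by
    refine D.cobarD_two_deltaPlus_eq_zero_iff.2 fun p q r ↦ ?_
    rw [hcomponent, hcomponent, add_assoc]
    split_ifs with hm
    · exact D.assocRTensor_reducedComul_eq hw₀ hw ((add_assoc p q r).trans hm)
    · rw [map_zero, map_zero]
  obtain ⟨x, hx, hxt⟩ := ker_inf_omega_le_of_subsingleton_extGrp hExt ⟨hcocycle, hmem⟩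
  refine ⟨⟨x, omega_one_le 𝒞 m hx⟩, fun p q hp hq hpq ↦ ?_⟩
  replace hxt : deltaPlus k C D.g x = t := (cobarD_one _ x).symm.trans hxt
  calc
    D.comul p q m ⟨x, _⟩ = map (homogeneousPart 𝒞 p) (homogeneousPart 𝒞 q) t := by
      rw [← D.reducedComul_of_ne_zero hp hq, ← hxt]
      rfl
    _ = w p q := by rw [hcomponent, if_pos hpq]

variable {D}

lemma assocRTensor_comul_zero (p r : ℕ) (t : 𝒞 p ⊗[k] 𝒞 r) :
    assocRTensor (𝒞 r) (D.comul p 0 p) t = (D.comul 0 r r).lTensor (𝒞 p) t := by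
  induction t with
  | zero => simp
  | add t t' ht ht' => rw [map_add, map_add, ht, ht']
  | tmul u v => simp [assocRTensor, comul_zero_left, comul_zero_right]

lemma assoc_rTensorAssocSymm_relationMap {b r n : ℕ} (hn : b + r = n) (y : 𝒞 1 ⊗[k] 𝒞 (n + 1)) :
    TensorProduct.assoc k _ (𝒞 b) (𝒞 r) (rTensorAssocSymm (𝒞 r) (D.relationMap b)
        ((D.comul (b + 1) r (n + 1)).lTensor (𝒞 1) y)) =
      (D.comul b r n).lTensor _ (D.relationMap n y) := by
  have hcoassoc : (TensorProduct.assoc k (𝒞 1) (𝒞 b) (𝒞 r)).toLinearMap ∘ₗ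
      (D.comul 1 b (b + 1)).rTensor (𝒞 r) ∘ₗ D.comul (b + 1) r (n + 1) =
      (D.comul b r n).lTensor (𝒞 1) ∘ₗ D.comul 1 n (n + 1) :=
    D.coassoc (Nat.add_comm 1 b) hn (n + 1)
  rw [relationMap, rTensorAssocSymm_comp_lTensor, assoc_rTensorAssocSymm_rTensorAssocSymm,
    ← LinearMap.lTensor_comp_apply, ← LinearMap.lTensor_comp_apply, LinearMap.comp_assoc, hcoassoc,
    LinearMap.lTensor_comp_apply, rTensorAssocSymm_lTensor_lTensor, relationMap,
    LinearMap.comp_apply]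

lemma exists_assocRTensor_comul_eq {n : ℕ} {y : 𝒞 1 ⊗[k] 𝒞 (n + 1)} (hy : D.relationMap n y = 0)
    (hexact : ∀ b < n, Function.Exact (D.comul 1 (b + 1) (b + 2)) (D.relationMap b))
    {a r s : ℕ} (hs : 1 + a = s) (hr : r ≠ 0) (har : a + r = n + 1) :
    ∃ w : 𝒞 s ⊗[k] 𝒞 r,
      assocRTensor (𝒞 r) (D.comul 1 a s) w = (D.comul a r (n + 1)).lTensor (𝒞 1) y := by
  cases a with
  | zero =>
    obtain rfl : r = n + 1 := by lia
    subst hs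
    exact ⟨y, assocRTensor_comul_zero 1 _ y⟩
  | succ b =>
    obtain rfl : s = b + 2 := by lia
    refine (exact_assocRTensor_rTensorAssocSymm (hexact b (by lia)) _).1 ?_
    rw [← LinearEquiv.map_eq_zero_iff (TensorProduct.assoc k _ _ _),
      assoc_rTensorAssocSymm_relationMap (by lia), hy, map_zero]

lemma assocRTensor_comul_eq_lTensor_comul (hD : D.Strong) {a a' q r s s' u n : ℕ}
    (hs : 1 + a = s) (ha' : a + q = a') (hu : q + r = u)
    {y : 𝒞 1 ⊗[k] 𝒞 n} {w : 𝒞 s ⊗[k] 𝒞 u} {w' : 𝒞 s' ⊗[k] 𝒞 r}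
    (hw : assocRTensor (𝒞 u) (D.comul 1 a s) w = (D.comul a u n).lTensor (𝒞 1) y)
    (hw' : assocRTensor (𝒞 r) (D.comul 1 a' s') w' = (D.comul a' r n).lTensor (𝒞 1) y) :
    assocRTensor (𝒞 r) (D.comul s q s') w' = (D.comul q r u).lTensor (𝒞 s) w := by
  apply assocRTensor_injective (W := 𝒞 q ⊗[k] 𝒞 r) (comul_injective hD hs)
  calc
    _ = (assocRTensor (𝒞 r) (D.comul a q a')).lTensor (𝒞 1)
          (assocRTensor (𝒞 r) (D.comul 1 a' s') w') := by
      rw [assocRTensor_assocRTensor, D.coassoc hs ha', assocRTensor_lTensor_comp,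
        ← LinearMap.lTensor_comp_apply]
      rfl
    _ = ((D.comul q r u).lTensor (𝒞 a)).lTensor (𝒞 1)
          (assocRTensor (𝒞 u) (D.comul 1 a s) w) := by
      rw [hw', hw, ← LinearMap.lTensor_comp_apply, ← LinearMap.lTensor_comp_apply,
        D.coassoc ha' hu]
    _ = _ := (assocRTensor_lTensor _ _ _).symm

lemma exact_relationMap_of_subsingleton_extGrp (hD : D.Strong) {n : ℕ}
    (hExt : Subsingleton (ExtGrp k C 𝒞 (deltaPlus k C D.g) 2 (n + 2)))
    (hexact : ∀ b < n, Function.Exact (D.comul 1 (b + 1) (b + 2)) (D.relationMap b)) :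
    Function.Exact (D.comul 1 (n + 1) (n + 2)) (D.relationMap n) := by
  refine fun y ↦ ⟨fun hy ↦ ?_, fun ⟨x, hx⟩ ↦ hx ▸ D.relationMap_comul n x⟩
  have hlift (s r : ℕ) : ∃ w : 𝒞 s ⊗[k] 𝒞 r, (s = 0 ∨ r = 0 → w = 0) ∧
      (s ≠ 0 → r ≠ 0 → s + r = n + 2 →
        assocRTensor (𝒞 r) (D.comul 1 (s - 1) s) w =
          (D.comul (s - 1) r (n + 1)).lTensor (𝒞 1) y) := by
    by_cases h : s ≠ 0 ∧ r ≠ 0 ∧ s + r = n + 2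
    · obtain ⟨w, hw⟩ := exists_assocRTensor_comul_eq hy hexact (a := s - 1) (r := r) (s := s)
        (by lia) h.2.1 (by lia)
      exact ⟨w, fun h₀ ↦ by lia, fun _ _ _ ↦ hw⟩
    · exact ⟨0, fun _ ↦ rfl, fun hs hr hsr ↦ absurd ⟨hs, hr, hsr⟩ h⟩
  choose w hw₀ hw using hlift
  have hcocycle (p q r : ℕ) (hp : p ≠ 0) (hq : q ≠ 0) (hr : r ≠ 0) (hpqr : p + q + r = n + 2) :
      assocRTensor (𝒞 r) (D.comul p q (p + q)) (w (p + q) r) =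
        (D.comul q r (q + r)).lTensor (𝒞 p) (w p (q + r)) :=
    assocRTensor_comul_eq_lTensor_comul hD (by lia) (by lia) rfl
      (hw p (q + r) hp (by lia) (by lia)) (hw (p + q) r (by lia) hr hpqr)
  obtain ⟨x, hx⟩ := D.exists_comul_eq_of_subsingleton_extGrp hExt hw₀ hcocycle
  refine ⟨x, (hx 1 (n + 1) (by lia) (by lia) (by lia)).trans ?_⟩
  apply assocRTensor_injective (comul_injective hD (Nat.add_zero 1))
  exact (hw 1 (n + 1) (by lia) (by lia) (by lia)).trans (assocRTensor_comul_zero 1 _ y).symm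

lemma exact_relationMap (hD : D.Strong)
    (hExt : ∀ m, 3 ≤ m → Subsingleton (ExtGrp k C 𝒞 (deltaPlus k C D.g) 2 m)) (n : ℕ) :
    Function.Exact (D.comul 1 (n + 1) (n + 2)) (D.relationMap n) := by
  induction n using Nat.strong_induction_on with
  | h n ih =>
    cases n with
    | zero => exact D.exact_relationMap_zero
    | succ n => exact exact_relationMap_of_subsingleton_extGrp hD (hExt _ (by lia)) ih

end GradedCoalgebraData

end Quadraticity

theorem statement17_general (D : GradedCoalgebraData k C 𝒞) (hstrong : D.Strong)
    (hExt : ∀ m : ℕ, 3 ≤ m → Subsingleton (ExtGrp k C 𝒞 (deltaPlus k C D.g) 2 m)) :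
    CoalgQuadratic k C 𝒞 D :=
  GradedCoalgebraData.coalgQuadratic_of_exact hstrong
    (GradedCoalgebraData.exact_relationMap hstrong hExt)

/-- **Statement 17.** A connected strongly graded `k`-coalgebra `C` which is Koszul, i.e.
with `Ext_C^{n,m}(k,k) = 0` for all `n ≠ m`, is quadratic. -/
theorem statement17 (D : GradedCoalgebraData k C 𝒞) (hstrong : D.Strong)
    (hkoszul : ∀ n m : ℕ, 1 ≤ n → 1 ≤ m → n ≠ m →
      Subsingleton (ExtGrp k C 𝒞 (deltaPlus k C D.g) n m)) :
    CoalgQuadratic k C 𝒞 D :=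
  statement17_general k C 𝒞 D hstrong fun m hm ↦ hkoszul 2 m (by lia) (by lia) (by lia)

end Koszul
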